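/- Pohozaev-type identity: let g : ℝ → ℝ be continuous with G(s) = ∫_1^s g(σ) dσ, and let u be a C¹ function on an interval I ⊂ (0,∞) such that v(r) := r^{N-1} φ_p(u'(r)) is differentiable on I with v'(r) = -r^{N-1} g(u(r)). Then for every a ∈ ℝ the function r ↦ r^N (|u'(r)|^p/p' + G(u(r))) + a r^{N-1} u(r) φ_p(u'(r)) is differentiable on I with derivative equal to r^{N-1} [ (1 - N/p + a) |u'(r)|^p + N G(u(r)) - a g(u(r)) u(r) ]. -/

import Mathlib

open Real Set Filter Topology

noncomputable def phip (p s : ℝ) : ℝ := |s| ^ (p - 2) * s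

def Freg (f : ℝ → ℝ) : Prop :=
  ContinuousOn f (Ici 0) ∧ ContDiffOn ℝ 1 f (Ioi 0)

def Feq (f : ℝ → ℝ) : Prop :=
  f 0 = 0 ∧ f 1 = 0 ∧ (∀ s : ℝ, 0 < s → s < 1 → f s < 0) ∧ (∀ s : ℝ, 1 < s → 0 < f s)

def Fzero (p : ℝ) (f : ℝ → ℝ) : Prop :=
  ∃ c : ℝ, ∀ᶠ s in 𝓝[>] (0:ℝ), c ≤ f s / s ^ (p - 1)

noncomputable def pstar (p : ℝ) (N : ℕ) : EReal :=
  if p < (N:ℝ) then (((N:ℝ) * p / ((N:ℝ) - p) : ℝ) : EReal) else ⊤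

noncomputable def fstar (f : ℝ → ℝ) (s : ℝ) : ℝ := sSup (f '' Icc 1 s)

noncomputable def Fint (f : ℝ → ℝ) (s : ℝ) : ℝ := ∫ σ in (1:ℝ)..s, f σ

def Fsubl (p : ℝ) (f : ℝ → ℝ) : Prop :=
  ∃ M : ℝ, 0 < M ∧ ∀ ε > 0, ∀ᶠ s in atTop, f s / s ^ (p - 1) ≤ M + ε

def FsubcWith (p : ℝ) (N : ℕ) (f : ℝ → ℝ) (η : ℝ) : Prop :=
  (∀ c : ℝ, ∃ᶠ s in atTop, c < f s / s ^ (p - 1)) ∧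
  0 < η ∧ η < 1 ∧
  ∃ L : ℝ, (L : EReal) < pstar p N ∧
    ∀ᶠ s in atTop, fstar f s * s / Fint f (η * s) ≤ L

def Fsubc (p : ℝ) (N : ℕ) (f : ℝ → ℝ) : Prop := ∃ η : ℝ, FsubcWith p N f η

/-- A radial solution of the Neumann problem on `[R1,R2]`. -/
def NeumannSol (p : ℝ) (N : ℕ) (R1 R2 : ℝ) (f u : ℝ → ℝ) : Prop :=
  (∀ x ∈ Icc R1 R2, DifferentiableAt ℝ u x) ∧
  ContinuousOn (deriv u) (Icc R1 R2) ∧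
  (∀ x ∈ Icc R1 R2, 0 < u x) ∧
  deriv u R1 = 0 ∧ deriv u R2 = 0 ∧
  ContinuousOn (fun x => x ^ (N - 1) * phip p (deriv u x)) (Icc R1 R2) ∧
  ∀ x ∈ Ioc R1 R2,
    HasDerivAt (fun t => t ^ (N - 1) * phip p (deriv u t)) (-(x ^ (N - 1)) * f (u x)) x

noncomputable def fhat (f : ℝ → ℝ) (s : ℝ) : ℝ := if 0 ≤ s then f s else 0

noncomputable def Fhat (f : ℝ → ℝ) (s : ℝ) : ℝ := ∫ σ in (1:ℝ)..s, fhat f σ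

/-- A solution of the Cauchy problem with datum `d`, for the nonlinearity `g`. -/
def CauchySol (p : ℝ) (N : ℕ) (R1 R2 : ℝ) (g u : ℝ → ℝ) (d : ℝ) : Prop :=
  (∀ x ∈ Icc R1 R2, DifferentiableAt ℝ u x) ∧
  ContinuousOn (deriv u) (Icc R1 R2) ∧
  u R1 = d ∧ deriv u R1 = 0 ∧
  ContinuousOn (fun x => x ^ (N - 1) * phip p (deriv u x)) (Icc R1 R2) ∧
  ∀ x ∈ Ioc R1 R2,
    HasDerivAt (fun t => t ^ (N - 1) * phip p (deriv u t)) (-(x ^ (N - 1)) * g (u x)) x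

noncomputable def rOne (R1 R2 : ℝ) (u : ℝ → ℝ) : ℝ :=
  sSup {x | x ∈ Icc R1 R2 ∧ ∀ s ∈ Ico R1 x, 0 < u s}

noncomputable def rZero (R2 η d : ℝ) (u : ℝ → ℝ) : ℝ :=
  sSup {x | x ∈ Icc 0 R2 ∧ ∀ s ∈ Ico 0 x, η * d < u s}

noncomputable def energy (p : ℝ) (f u : ℝ → ℝ) (x : ℝ) : ℝ :=
  |deriv u x| ^ p / (p / (p - 1)) + Fhat f (u x)

def NonConstOn (R1 R2 : ℝ) (u : ℝ → ℝ) : Prop :=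
  ∃ x ∈ Icc R1 R2, ∃ x' ∈ Icc R1 R2, u x ≠ u x'

def DistinctOn (R1 R2 : ℝ) (u v : ℝ → ℝ) : Prop :=
  ∃ x ∈ Icc R1 R2, u x ≠ v x

noncomputable def nOverPstar (p : ℝ) (N : ℕ) : ℝ :=
  if p < (N:ℝ) then ((N:ℝ) - p) / p else 0

theorem abs_phip (p s : ℝ) (hp : 1 < p) : |phip p s| = |s| ^ (p - 1) := by
  unfold phip
  rcases eq_or_ne s 0 with rfl | hs
  · simp [Real.zero_rpow (sub_pos.2 hp).ne']
  · have h : 0 < |s| := abs_pos.2 hs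
    rw [abs_mul, abs_of_nonneg (Real.rpow_nonneg h.le _), show p - 1 = p - 2 + 1 by ring,
      Real.rpow_add_one h.ne']

theorem abs_phip_rpow_conj (p s : ℝ) (hp : 1 < p) : |phip p s| ^ (p / (p - 1)) = |s| ^ p := by
  rw [abs_phip p s hp, ← Real.rpow_mul (abs_nonneg s), mul_div_cancel₀ p (sub_pos.2 hp).ne']

theorem phip_conj_phip (p s : ℝ) (hp : 1 < p) :
    |phip p s| ^ (p / (p - 1) - 2) * phip p s = s := by
  rcases eq_or_ne s 0 with rfl | hs
  · simp [phip]
  · have h : 0 < |s| := abs_pos.2 hs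
    have hp1 : p - 1 ≠ 0 := (sub_pos.2 hp).ne'
    rw [abs_phip p s hp, ← Real.rpow_mul h.le, phip, ← mul_assoc, ← Real.rpow_add h,
      show (p - 1) * (p / (p - 1) - 2) + (p - 2) = 0 by field_simp; ring, Real.rpow_zero, one_mul]

theorem mul_phip_self (p s : ℝ) (hp : 1 < p) : s * phip p s = |s| ^ p := by
  unfold phip
  rcases eq_or_ne s 0 with rfl | hs
  · simp [Real.zero_rpow (zero_lt_one.trans hp).ne']
  · have h : 0 < |s| := abs_pos.2 hs
    rw [show p = p - 2 + 1 + 1 by ring, Real.rpow_add_one h.ne', Real.rpow_add_one h.ne',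
      mul_assoc, abs_mul_abs_self, show p - 2 + 1 + 1 - 2 = p - 2 by ring]
    ring

/-- The derivative of a factor `w` recovered from that of `t ^ n * w t`. -/
theorem hasDerivAt_of_pow_mul {w : ℝ → ℝ} {n : ℕ} {x c : ℝ} (hx : x ≠ 0)
    (h : HasDerivAt (fun t => t ^ n * w t) (x ^ n * c) x) :
    HasDerivAt w (c - n / x * w x) x := by
  have hq := h.div (hasDerivAt_pow n x) (pow_ne_zero n hx)
  refine (hq.congr_of_eventuallyEq ?_).congr_deriv ?_
  · filter_upwards [isOpen_ne.mem_nhds hx] with t ht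
    exact (mul_div_cancel_left₀ (w t) (pow_ne_zero n ht)).symm
  · cases n with
    | zero => simp
    | succ m =>
      simp only [Nat.add_sub_cancel]
      field_simp
      ring

/-- `|v| ^ p` is differentiable wherever `phip p ∘ v` is. -/
theorem hasDerivAt_abs_rpow_of_phip {p : ℝ} (hp : 1 < p) {v : ℝ → ℝ} {w' x : ℝ}
    (h : HasDerivAt (fun t => phip p (v t)) w' x) :
    HasDerivAt (fun t => |v t| ^ p) (p / (p - 1) * v x * w') x := by
  have hq : 1 < p / (p - 1) := by
    rw [one_lt_div (sub_pos.2 hp)]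
    linarith
  have hc := (hasDerivAt_abs_rpow (phip p (v x)) hq).comp x h
  refine (hc.congr_of_eventuallyEq (.of_forall fun t => ?_)).congr_deriv ?_
  · exact (abs_phip_rpow_conj p (v t) hp).symm
  · rw [mul_assoc (p / (p - 1)), phip_conj_phip p (v x) hp]

theorem stmt16 (p : ℝ) (hp : 1 < p) (N : ℕ) (hN : 1 ≤ N)
    (g : ℝ → ℝ) (hg : Continuous g)
    (I : Set ℝ) (hI : Convex ℝ I) (hIpos : I ⊆ Ioi 0)
    (u : ℝ → ℝ)
    (hu_diff : ∀ x ∈ I, DifferentiableAt ℝ u x)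
    (hu_cont : ContinuousOn (deriv u) I)
    (hode : ∀ x ∈ I, HasDerivAt (fun t => t ^ (N - 1) * phip p (deriv u t))
      (-(x ^ (N - 1)) * g (u x)) x) :
    ∀ a : ℝ, ∀ x ∈ I,
      HasDerivAt
        (fun t => t ^ N * (|deriv u t| ^ p / (p / (p - 1)) + ∫ σ in (1:ℝ)..u t, g σ) +
          a * t ^ (N - 1) * u t * phip p (deriv u t))
        (x ^ (N - 1) * ((1 - (N : ℝ) / p + a) * |deriv u x| ^ p +
          (N : ℝ) * (∫ σ in (1:ℝ)..u x, g σ) - a * g (u x) * u x)) x := by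
  intro a x hx
  obtain ⟨n, rfl⟩ : ∃ n, N = n + 1 := ⟨N - 1, by omega⟩
  simp only [Nat.add_sub_cancel] at hode ⊢
  have hx0 : x ≠ 0 := (hIpos hx).ne'
  have hp0 : p ≠ 0 := by linarith
  have hp1 : p - 1 ≠ 0 := (sub_pos.2 hp).ne'
  have hu := (hu_diff x hx).hasDerivAt
  have hv := hode x hx
  have hw := hasDerivAt_of_pow_mul (w := fun t => phip p (deriv u t)) (c := -g (u x)) hx0
    (hv.congr_deriv (by ring))
  have hA := hasDerivAt_abs_rpow_of_phip hp hw
  have hG : HasDerivAt (fun t => ∫ σ in (1:ℝ)..u t, g σ) (g (u x) * deriv u x) x :=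
    (hg.integral_hasStrictDerivAt 1 (u x)).hasDerivAt.comp x hu
  have hsum := ((hasDerivAt_pow (n + 1) x).mul ((hA.div_const (p / (p - 1))).add hG)).add
    ((hu.mul hv).const_mul a)
  refine (hsum.congr_of_eventuallyEq (.of_forall fun t => ?_)).congr_deriv ?_
  · simp only [Pi.add_apply, Pi.mul_apply]
    ring
  · simp only [Pi.add_apply, Nat.add_sub_cancel]
    rw [← mul_phip_self p (deriv u x) hp]
    push_cast
    field_simp
    ring
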